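/- Let A ∈ ℝ^{n×n}, B ∈ ℝ^{n×m}, C ∈ ℝ^{p×n}, μ := (p+m)·n, F ∈ ℝ^{n×n}, L ∈ ℝ^{n×p}, and let T ∈ ℝ^{n×n} be invertible with F·T = T·(A − L·C). Define θ := [vec(T·L); vec(T·B)] ∈ ℝ^{μ}. Let x : ℝ → ℝ^n be differentiable with x'(t) = A·x(t) + B·u(t) for all t ≥ 0, let y(t) := C·x(t), and let M : ℝ → ℝ^{n×μ} be differentiable with M'(t) = F·M(t) + [y(t)^⊤ ⊗ I_n , u(t)^⊤ ⊗ I_n] for all t ≥ 0. If T·x(0) = M(0)·θ, then T·x(t) = M(t)·θ for all t ≥ 0 (i.e., the set 𝒜 = {(x, M) : T·x = M·θ} is invariant). -/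

import Mathlib

open Matrix Filter
open scoped Kronecker

/-- Column-stacking vectorization `vec X : (col, row) ↦ X row col`
(`vec X` stacks the columns of `X` one below another). -/
def mvec {l : ℕ} {K : Type*} (X : Matrix (Fin l) K ℝ) : K × Fin l → ℝ :=
  fun q => X q.2 q.1

/-- The Kronecker product `θᵀ ⊗ S` of a row vector `θᵀ` with a square matrix `S`,
with the trivial row index of `θᵀ` flattened away. -/
def rowKron {n : ℕ} {K : Type*} (θ : K → ℝ) (S : Matrix (Fin n) (Fin n) ℝ) :
    Matrix (Fin n) (K × Fin n) ℝ :=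
  ((Matrix.of fun (_ : Fin 1) j => θ j) ⊗ₖ S).submatrix (fun i => ((0 : Fin 1), i)) id

/-- Column index set of the Kreisselmeier filter state `M ∈ ℝ^{n × (p+m)n}`. -/
abbrev Kix (n m p : ℕ) := (Fin p × Fin n) ⊕ (Fin m × Fin n)

/-- The regressor `[yᵀ ⊗ Iₙ , uᵀ ⊗ Iₙ] ∈ ℝ^{n × (p+m)n}` (horizontal concatenation). -/
def regressor {m p : ℕ} (n : ℕ) (y : Fin p → ℝ) (u : Fin m → ℝ) :
    Matrix (Fin n) (Kix n m p) ℝ :=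
  Matrix.fromCols (rowKron y (1 : Matrix (Fin n) (Fin n) ℝ))
    (rowKron u (1 : Matrix (Fin n) (Fin n) ℝ))

/-- A real square matrix is Hurwitz if all of its eigenvalues over `ℂ`
have strictly negative real part. -/
def IsHurwitz {N : Type*} [Fintype N] [DecidableEq N] (A : Matrix N N ℝ) : Prop :=
  ∀ z ∈ spectrum ℂ (A.map (Complex.ofReal : ℝ → ℂ)), z.re < 0

/-- PBH test for stabilizability: for every `λ ∈ ℂ` with `Re λ ≥ 0`,
`rank [λ·I − A₀ , B₀] = q` over `ℂ`. -/
def IsStabilizable {q m : Type*} [Fintype q] [DecidableEq q] [Fintype m]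
    (A₀ : Matrix q q ℝ) (B₀ : Matrix q m ℝ) : Prop :=
  ∀ z : ℂ, 0 ≤ z.re →
    (Matrix.fromCols (z • (1 : Matrix q q ℂ) - A₀.map (Complex.ofReal : ℝ → ℂ))
      (B₀.map (Complex.ofReal : ℝ → ℂ))).rank = Fintype.card q

/-- Euclidean norm of a vector. -/
noncomputable def euclNorm {ι : Type*} [Fintype ι] (v : ι → ℝ) : ℝ :=
  Real.sqrt (∑ i, v i ^ 2)

/-- Frobenius norm of a matrix. -/
noncomputable def frobNorm {ι K : Type*} [Fintype ι] [Fintype K] (X : Matrix ι K ℝ) : ℝ :=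
  Real.sqrt (∑ i, ∑ j, X i j ^ 2)

/-- `F_ξ := I_μ ⊗ F`. -/
def Fxi {n m p : ℕ} (F : Matrix (Fin n) (Fin n) ℝ) :
    Matrix (Kix n m p × Fin n) (Kix n m p × Fin n) ℝ :=
  (1 : Matrix (Kix n m p) (Kix n m p) ℝ) ⊗ₖ F

/-- `B_ξ := [0_{pn²×m} ; I_m ⊗ vec(I_n)]` (vertical concatenation), written entrywise
on the flattened row index `Kix n m p × Fin n`. -/
def Bxi (n m p : ℕ) : Matrix (Kix n m p × Fin n) (Fin m) ℝ :=
  Matrix.of fun q j =>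
    Sum.elim (fun _ => (0 : ℝ))
      (fun ja => (1 : Matrix (Fin m) (Fin m) ℝ) ja.1 j *
        (1 : Matrix (Fin n) (Fin n) ℝ) ja.2 q.2) q.1

/-- `L_ξ := [I_p ⊗ vec(I_n) ; 0_{mn²×p}]` (vertical concatenation), written entrywise
on the flattened row index `Kix n m p × Fin n`. -/
def Lxi (n m p : ℕ) : Matrix (Kix n m p × Fin n) (Fin p) ℝ :=
  Matrix.of fun q j =>
    Sum.elim (fun ya => (1 : Matrix (Fin p) (Fin p) ℝ) ya.1 j *
        (1 : Matrix (Fin n) (Fin n) ℝ) ya.2 q.2) (fun _ => (0 : ℝ)) q.1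

/-!
The error `e = T x - M θ` satisfies the homogeneous linear equation `e' = F e`: since
`[yᵀ ⊗ I, uᵀ ⊗ I] θ = T L y + T B u`, the input terms cancel, and with `y = C x` the intertwining
relation turns the remaining `T (A - L C) x` into `F T x`. Grönwall's inequality then keeps `e` at
zero.
-/

theorem rowKron_mulVec_mvec {n : ℕ} {K : Type*} [Fintype K] (v : K → ℝ)
    (S : Matrix (Fin n) (Fin n) ℝ) (X : Matrix (Fin n) K ℝ) :
    rowKron v S *ᵥ mvec X = (S * X) *ᵥ v :=
  funext fun i => congrFun (kronecker_mulVec_vec S X (Matrix.of fun (_ : Fin 1) j => v j)) (0, i)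

theorem regressor_mulVec_sumElim_mvec {n m p : ℕ} (y : Fin p → ℝ) (u : Fin m → ℝ)
    (P : Matrix (Fin n) (Fin p) ℝ) (Q : Matrix (Fin n) (Fin m) ℝ) :
    regressor n y u *ᵥ Sum.elim (mvec P) (mvec Q) = P *ᵥ y + Q *ᵥ u := by
  rw [regressor, fromCols_mulVec_sumElim, rowKron_mulVec_mvec, rowKron_mulVec_mvec,
    Matrix.one_mul, Matrix.one_mul]

theorem hasDerivAt_mulVec {𝕜 ι κ : Type*} [NontriviallyNormedField 𝕜] [Finite ι] [Fintype κ]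
    {M : 𝕜 → Matrix ι κ 𝕜} {M' : Matrix ι κ 𝕜} {v : 𝕜 → κ → 𝕜} {v' : κ → 𝕜} {t : 𝕜}
    (hM : ∀ i j, HasDerivAt (fun s => M s i j) (M' i j) t)
    (hv : ∀ j, HasDerivAt (fun s => v s j) (v' j) t) :
    HasDerivAt (fun s => M s *ᵥ v s) (M' *ᵥ v t + M t *ᵥ v') t := by
  have := Fintype.ofFinite ι
  refine hasDerivAt_pi.2 fun i => ?_
  have hsum : HasDerivAt (fun s => ∑ j, M s i j * v s j)
      (∑ j, (M' i j * v t j + M t i j * v' j)) t :=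
    HasDerivAt.fun_sum fun j _ => (hM i j).mul (hv j)
  rwa [Finset.sum_add_distrib] at hsum

theorem eq_zero_of_hasDerivWithinAt_clm {E : Type*} [NormedAddCommGroup E] [NormedSpace ℝ E]
    (Φ : E →L[ℝ] E) {e : ℝ → E} {a b : ℝ} (he : ContinuousOn e (Set.Icc a b))
    (he' : ∀ t ∈ Set.Ico a b, HasDerivWithinAt e (Φ (e t)) (Set.Ici t) t) (ha : e a = 0) :
    ∀ t ∈ Set.Icc a b, e t = 0 :=
  eq_zero_of_abs_deriv_le_mul_abs_self_of_eq_zero_right he he' ha fun t _ => Φ.le_opNorm (e t)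

section ErrorDynamics

variable {n m p q : ℕ} {A : Matrix (Fin n) (Fin n) ℝ} {B : Matrix (Fin n) (Fin m) ℝ}
  {C : Matrix (Fin p) (Fin n) ℝ} {F : Matrix (Fin q) (Fin q) ℝ} {L : Matrix (Fin n) (Fin p) ℝ}
  {T : Matrix (Fin q) (Fin n) ℝ} {θ : Kix q m p → ℝ}

theorem error_vectorField_eq_mulVec (hFT : F * T = T * (A - L * C))
    (hθ : θ = Sum.elim (mvec (T * L)) (mvec (T * B)))
    (x : Fin n → ℝ) (u : Fin m → ℝ) (M : Matrix (Fin q) (Kix q m p) ℝ) :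
    T *ᵥ (A *ᵥ x + B *ᵥ u) - (F * M + regressor q (C *ᵥ x) u) *ᵥ θ = F *ᵥ (T *ᵥ x - M *ᵥ θ) := by
  have hregressor : regressor q (C *ᵥ x) u *ᵥ θ = (T * L) *ᵥ (C *ᵥ x) + (T * B) *ᵥ u := by
    rw [hθ, regressor_mulVec_sumElim_mvec]
  have hintertwine : F *ᵥ (T *ᵥ x) = T *ᵥ (A *ᵥ x) - (T * L) *ᵥ (C *ᵥ x) := by
    simp only [mulVec_mulVec, hFT, Matrix.mul_sub, sub_mulVec, Matrix.mul_assoc]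
  calc T *ᵥ (A *ᵥ x + B *ᵥ u) - (F * M + regressor q (C *ᵥ x) u) *ᵥ θ
      = T *ᵥ (A *ᵥ x) + (T * B) *ᵥ u
          - ((F * M) *ᵥ θ + ((T * L) *ᵥ (C *ᵥ x) + (T * B) *ᵥ u)) := by
        rw [mulVec_add, mulVec_mulVec u, add_mulVec, hregressor]
    _ = T *ᵥ (A *ᵥ x) - (T * L) *ᵥ (C *ᵥ x) - (F * M) *ᵥ θ := by abel
    _ = F *ᵥ (T *ᵥ x - M *ᵥ θ) := by rw [← hintertwine, mulVec_sub, mulVec_mulVec θ]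

theorem hasDerivAt_error (hFT : F * T = T * (A - L * C))
    (hθ : θ = Sum.elim (mvec (T * L)) (mvec (T * B)))
    {u : Fin m → ℝ} {x : ℝ → Fin n → ℝ} {M : ℝ → Matrix (Fin q) (Kix q m p) ℝ} {t : ℝ}
    (hx : ∀ i, HasDerivAt (fun s => x s i) ((A *ᵥ x t + B *ᵥ u) i) t)
    (hM : ∀ i j, HasDerivAt (fun s => M s i j)
      ((F * M t + regressor q (C *ᵥ x t) u) i j) t) :
    HasDerivAt (fun s => T *ᵥ x s - M s *ᵥ θ) (F *ᵥ (T *ᵥ x t - M t *ᵥ θ)) t := by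
  have hTx : HasDerivAt (fun s => T *ᵥ x s) (T *ᵥ (A *ᵥ x t + B *ᵥ u)) t := by
    simpa only [zero_mulVec, zero_add] using
      hasDerivAt_mulVec (M' := 0) (fun i j => hasDerivAt_const t (T i j)) hx
  have hMθ : HasDerivAt (fun s => M s *ᵥ θ) ((F * M t + regressor q (C *ᵥ x t) u) *ᵥ θ) t := by
    simpa only [mulVec_zero, add_zero] using
      hasDerivAt_mulVec (v' := 0) hM (fun j => hasDerivAt_const t (θ j))
  rw [← error_vectorField_eq_mulVec hFT hθ (x t) u (M t)]
  exact hTx.sub hMθ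

end ErrorDynamics

theorem stmt3_general {n m p q : ℕ}
    (A : Matrix (Fin n) (Fin n) ℝ) (B : Matrix (Fin n) (Fin m) ℝ)
    (C : Matrix (Fin p) (Fin n) ℝ)
    (F : Matrix (Fin q) (Fin q) ℝ) (L : Matrix (Fin n) (Fin p) ℝ)
    (T : Matrix (Fin q) (Fin n) ℝ)
    (hFT : F * T = T * (A - L * C))
    (θ : Kix q m p → ℝ) (hθ : θ = Sum.elim (mvec (T * L)) (mvec (T * B)))
    (u : ℝ → Fin m → ℝ) (x : ℝ → Fin n → ℝ) (M : ℝ → Matrix (Fin q) (Kix q m p) ℝ)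
    (hx : ∀ t, 0 ≤ t → ∀ i, HasDerivAt (fun s => x s i) ((A *ᵥ x t + B *ᵥ u t) i) t)
    (hM : ∀ t, 0 ≤ t → ∀ i j, HasDerivAt (fun s => M s i j)
        ((F * M t + regressor q (C *ᵥ x t) (u t)) i j) t)
    (h0 : T *ᵥ x 0 = M 0 *ᵥ θ) :
    ∀ t, 0 ≤ t → T *ᵥ x t = M t *ᵥ θ := by
  intro t ht
  have herror : ∀ s, 0 ≤ s →
      HasDerivAt (fun s => T *ᵥ x s - M s *ᵥ θ) (F *ᵥ (T *ᵥ x s - M s *ᵥ θ)) s :=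
    fun s hs => hasDerivAt_error hFT hθ (hx s hs) (hM s hs)
  exact sub_eq_zero.1 <| eq_zero_of_hasDerivWithinAt_clm F.mulVecLin.toContinuousLinearMap
    (fun s hs => (herror s hs.1).continuousAt.continuousWithinAt)
    (fun s hs => (herror s hs.1).hasDerivWithinAt)
    (sub_eq_zero.2 h0) t (Set.right_mem_Icc.2 ht)

/-- invariance of the set `𝒜 = {(x, M) : T·x = M·θ}`.
With `T` invertible, `F·T = T·(A − L·C)` and `θ := [vec(T·L); vec(T·B)]`, if
`T·x(0) = M(0)·θ` then `T·x(t) = M(t)·θ` for all `t ≥ 0`. -/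
theorem stmt3 {n m p : ℕ}
    (A : Matrix (Fin n) (Fin n) ℝ) (B : Matrix (Fin n) (Fin m) ℝ)
    (C : Matrix (Fin p) (Fin n) ℝ)
    (F : Matrix (Fin n) (Fin n) ℝ) (L : Matrix (Fin n) (Fin p) ℝ)
    (T : Matrix (Fin n) (Fin n) ℝ) (hT : IsUnit T)
    (hFT : F * T = T * (A - L * C))
    (θ : Kix n m p → ℝ) (hθ : θ = Sum.elim (mvec (T * L)) (mvec (T * B)))
    (u : ℝ → Fin m → ℝ) (x : ℝ → Fin n → ℝ) (M : ℝ → Matrix (Fin n) (Kix n m p) ℝ)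
    (hx : ∀ t, 0 ≤ t → ∀ i, HasDerivAt (fun s => x s i)
        ((A.mulVec (x t) + B.mulVec (u t)) i) t)
    (hM : ∀ t, 0 ≤ t → ∀ i j, HasDerivAt (fun s => M s i j)
        ((F * M t + regressor n (C.mulVec (x t)) (u t)) i j) t)
    (h0 : T.mulVec (x 0) = (M 0).mulVec θ) :
    ∀ t, 0 ≤ t → T.mulVec (x t) = (M t).mulVec θ :=
  stmt3_general A B C F L T hFT θ hθ u x M hx hM h0
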